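/- arXiv:2304.07450 — 4 statements merged into one kernel-verified Lean document; each statement's English description precedes it below -/
import Mathlib

section
/- Let K ≥ 1, δ ≥ 0, and let S^n, S^m : {1,…,K} → ℝ be the scores of two items n and m under K basic models. Let a, b : {1,…,K} → ℝ satisfy a_k ≥ 0, b_k ≥ 0, Σ_{k=1}^K a_k = 1, Σ_{k=1}^K b_k = 1, and |b_k − a_k| ≤ δ for every k. Define z^k = S^n_k − S^m_k, the ensemble scores S^{n,ens} = Σ_k a_k S^n_k and S^{m,ens} = Σ_k b_k S^m_k, and z^ens = S^{n,ens} − S^{m,ens}. For each k define the ambiguity A_k = l_b(z^k) − l_b(z^ens) − (σ(z^ens) − 1)(z^k − z^ens), where l_b(z) = log(1 + exp(−z)) and σ(x) = 1/(1 + exp(−x)). Then l_b(z^ens) ≤ Σ_{k=1}^K a_k l_b(z^k) + δ Σ_{k=1}^K |S^m_k| − Σ_{k=1}^K a_k A_k. -/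
/-- The pair-wise (BPR) loss of a score difference. -/
noncomputable def bprLoss (z : ℝ) : ℝ := Real.log (1 + Real.exp (-z))

/-- The sigmoid function. -/
noncomputable def sigmoid (x : ℝ) : ℝ := 1 / (1 + Real.exp (-x))

/-- Error-ambiguity decomposition bound for the pair-wise (BPR) loss with
item-level weights: the BPR loss of the ensemble score difference is bounded
by the weighted sum of basic-model BPR losses, plus `δ` times the sum of the
absolute scores of item `m`, minus the weighted sum of the ambiguities. -/
theorem pairwise_error_ambiguity_bound
    (K : ℕ) (hK : 1 ≤ K) (δ : ℝ) (hδ : 0 ≤ δ)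
    (Sn Sm : Fin K → ℝ) (a b : Fin K → ℝ)
    (ha : ∀ k, 0 ≤ a k) (hb : ∀ k, 0 ≤ b k)
    (hsa : ∑ k, a k = 1) (hsb : ∑ k, b k = 1)
    (hab : ∀ k, |b k - a k| ≤ δ)
    (z : Fin K → ℝ) (hz : ∀ k, z k = Sn k - Sm k)
    (zens : ℝ) (hzens : zens = (∑ k, a k * Sn k) - ∑ k, b k * Sm k)
    (A : Fin K → ℝ)
    (hA : ∀ k, A k =
      bprLoss (z k) - bprLoss zens - (sigmoid zens - 1) * (z k - zens)) :
    bprLoss zens ≤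
      (∑ k, a k * bprLoss (z k)) + δ * (∑ k, |Sm k|) - ∑ k, a k * A k := by

  have h1 : ∑ k, a k * A k = (∑ k, a k * bprLoss (z k)) - bprLoss zens
      - (sigmoid zens - 1) * ((∑ k, a k * z k) - zens) := by
    have : ∀ k, a k * A k = a k * bprLoss (z k) - a k * bprLoss zens
        - ((sigmoid zens - 1) * (a k * z k) - a k * ((sigmoid zens - 1) * zens)) := by
      intro k
      rw [hA]
      ring
    rw [Finset.sum_congr rfl (fun k _ => this k)]
    simp only [Finset.sum_sub_distrib, ← Finset.mul_sum, ← Finset.sum_mul, hsa]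
    ring
  have h2 : (∑ k, a k * z k) - zens = ∑ k, (b k - a k) * Sm k := by
    rw [hzens]
    simp only [hz, mul_sub, sub_mul, Finset.sum_sub_distrib]
    ring
  have h3 : |∑ k, (b k - a k) * Sm k| ≤ δ * ∑ k, |Sm k| := by
    rw [Finset.mul_sum]
    refine (Finset.abs_sum_le_sum_abs _ _).trans (Finset.sum_le_sum fun k _ => ?_)
    rw [abs_mul]
    exact mul_le_mul_of_nonneg_right (hab k) (abs_nonneg _)
  have h4 : |sigmoid zens - 1| ≤ 1 := by
    have he := Real.exp_pos (-zens)
    have hs0 : 0 ≤ sigmoid zens := by unfold sigmoid; positivity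
    have hs1 : sigmoid zens ≤ 1 := by
      unfold sigmoid
      rw [div_le_one (by positivity)]
      linarith
    rw [abs_le]
    constructor <;> linarith
  have h5 : |(sigmoid zens - 1) * ∑ k, (b k - a k) * Sm k| ≤ δ * ∑ k, |Sm k| := by
    rw [abs_mul]
    exact (mul_le_of_le_one_left (abs_nonneg _) h4).trans h3
  rw [h1, h2]
  linarith [(abs_le.mp h5).1]
end

section
/- Let N ≥ 1 and K ≥ 1, and let S_{n,k} ∈ ℝ for n ∈ {1,…,N}, k ∈ {1,…,K} be the scores of N items (indexed in ground-truth ranking order) under K basic models. Let δ ≥ 0 and let weights w_{n,k} ∈ ℝ satisfy w_{n,k} ≥ 0, Σ_{k=1}^K w_{n,k} = 1 for every n, and |w_{n,k} − w_{m,k}| ≤ δ for all n, m, k. Define the ensemble scores S^ens_n = Σ_{k=1}^K w_{n,k} S_{n,k}. For a score vector x : {1,…,N} → ℝ define g_n(x) = log(1 + Σ_{m=n+1}^N exp(−(x_n − x_m))) and the list-wise loss L(x) = Σ_{n=1}^N g_n(x). For each n, k define the ambiguity A_{n,k} = g_n(S_{·,k}) − g_n(S^ens) + Σ_{m=n+1}^N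 [exp(−(S^ens_n − S^ens_m)) / (1 + Σ_{j=n+1}^N exp(−(S^ens_n − S^ens_j)))] · ((S_{n,k} − S_{m,k}) − (S^ens_n − S^ens_m)). Then L(S^ens) ≤ Σ_{k=1}^K (max_{1≤n≤N} w_{n,k}) L(S_{·,k}) + δ · N · max_{1≤m≤N} Σ_{k=1}^K |S_{m,k}| − Σ_{n=1}^N Σ_{k=1}^K w_{n,k} A_{n,k}. -/
/-- Summand of the list-wise Plackett–Luce loss at position `n`:
`gₙ(x) = log(1 + Σ_{m > n} exp(−(xₙ − xₘ)))`. -/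
noncomputable def gPL {N : ℕ} (n : Fin N) (x : Fin N → ℝ) : ℝ :=
  Real.log (1 + ∑ m ∈ Finset.univ.filter (fun m => n < m),
    Real.exp (-(x n - x m)))

/-- The list-wise Plackett–Luce loss (up to an additive constant). -/
noncomputable def LPL {N : ℕ} (x : Fin N → ℝ) : ℝ := ∑ n, gPL n x

/-- Error-ambiguity decomposition bound for the list-wise (Plackett–Luce) loss
with item-level weights: the ensemble list-wise loss is bounded by the
max-weighted sum of basic-model losses, plus `δ·N` times the largest total
absolute score of an item, minus the weighted sum of ambiguities. -/
theorem listwise_error_ambiguity_bound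
    (N K : ℕ) (hN : 1 ≤ N) (hK : 1 ≤ K)
    (S : Fin N → Fin K → ℝ) (δ : ℝ) (hδ : 0 ≤ δ)
    (w : Fin N → Fin K → ℝ) (hw : ∀ n k, 0 ≤ w n k)
    (hsum : ∀ n, ∑ k, w n k = 1)
    (hδw : ∀ n m k, |w n k - w m k| ≤ δ)
    (Sens : Fin N → ℝ) (hSens : ∀ n, Sens n = ∑ k, w n k * S n k)
    (A : Fin N → Fin K → ℝ)
    (hA : ∀ n k, A n k =
      gPL n (fun i => S i k) - gPL n Sens +
        ∑ m ∈ Finset.univ.filter (fun m => n < m),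
          (Real.exp (-(Sens n - Sens m)) /
              (1 + ∑ j ∈ Finset.univ.filter (fun j => n < j),
                Real.exp (-(Sens n - Sens j)))) *
            ((S n k - S m k) - (Sens n - Sens m))) :
    LPL Sens ≤
      (∑ k, (⨆ n, w n k) * LPL (fun i => S i k)) +
        δ * N * (⨆ m, ∑ k, |S m k|) -
        ∑ n, ∑ k, w n k * A n k := by
  set M := ⨆ m, ∑ k, |S m k| with hM
  have hMle : ∀ m, ∑ k, |S m k| ≤ M := fun m =>
    le_ciSup (f := fun m => ∑ k, |S m k|) (Set.finite_range _).bddAbove m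
  have hWle : ∀ n k, w n k ≤ ⨆ n, w n k := fun n k =>
    le_ciSup (f := fun n => w n k) (Set.finite_range _).bddAbove n
  have hM0 : 0 ≤ M :=
    le_trans (Finset.sum_nonneg fun k _ => abs_nonneg _) (hMle ⟨0, hN⟩)
  have hg : ∀ (n : Fin N) (x : Fin N → ℝ), 0 ≤ gPL n x := by
    intro n x
    unfold gPL
    apply Real.log_nonneg
    have : 0 ≤ ∑ m ∈ Finset.univ.filter (fun m => n < m), Real.exp (-(x n - x m)) :=
      Finset.sum_nonneg fun _ _ => (Real.exp_pos _).le
    linarith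
  have key : ∀ n, gPL n Sens ≤
      ∑ k, (⨆ n, w n k) * gPL n (fun i => S i k) + δ * M - ∑ k, w n k * A n k := by
    intro n
    set D := 1 + ∑ j ∈ Finset.univ.filter (fun j => n < j),
                Real.exp (-(Sens n - Sens j)) with hD
    have hs0 : 0 ≤ ∑ j ∈ Finset.univ.filter (fun j => n < j),
                Real.exp (-(Sens n - Sens j)) :=
      Finset.sum_nonneg fun _ _ => (Real.exp_pos _).le
    have hDpos : 0 < D := by linarith
    have hdiff : ∀ m, ∑ k, w n k * ((S n k - S m k) - (Sens n - Sens m)) ≤ δ * M := by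
      intro m
      have e : ∑ k, w n k * ((S n k - S m k) - (Sens n - Sens m))
          = ∑ k, (w m k - w n k) * S m k := by
        have e1 : ∑ k, w n k * ((S n k - S m k) - (Sens n - Sens m))
          = ∑ k, w n k * S n k - ∑ k, w n k * S m k
            - (∑ k, w n k) * (Sens n - Sens m) := by
          rw [Finset.sum_mul, ← Finset.sum_sub_distrib, ← Finset.sum_sub_distrib]
          exact Finset.sum_congr rfl fun k _ => by ring
        have e2 : ∑ k, (w m k - w n k) * S m k
          = ∑ k, w m k * S m k - ∑ k, w n k * S m k := by
          rw [← Finset.sum_sub_distrib]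
          exact Finset.sum_congr rfl fun k _ => by ring
        rw [e1, e2, hsum, ← hSens, ← hSens]
        ring
      rw [e]
      calc ∑ k, (w m k - w n k) * S m k ≤ ∑ k, δ * |S m k| := by
            refine Finset.sum_le_sum fun k _ => ?_
            refine (le_abs_self _).trans ?_
            rw [abs_mul]
            exact mul_le_mul_of_nonneg_right (hδw m n k) (abs_nonneg _)
        _ = δ * ∑ k, |S m k| := by rw [Finset.mul_sum]
        _ ≤ δ * M := mul_le_mul_of_nonneg_left (hMle m) hδ
    have hAs : ∑ k, w n k * A n k = ∑ k, w n k * gPL n (fun i => S i k) - gPL n Sens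
        + ∑ m ∈ Finset.univ.filter (fun m => n < m),
          (Real.exp (-(Sens n - Sens m)) / D) *
            ∑ k, w n k * ((S n k - S m k) - (Sens n - Sens m)) := by
      have e3 : gPL n Sens = ∑ k, w n k * gPL n Sens := by
        rw [← Finset.sum_mul, hsum, one_mul]
      rw [e3]
      simp_rw [Finset.mul_sum]
      rw [Finset.sum_comm, ← Finset.sum_sub_distrib, ← Finset.sum_add_distrib]
      refine Finset.sum_congr rfl fun k _ => ?_
      rw [hA, mul_add, mul_sub, Finset.mul_sum]
      congr 1
      exact Finset.sum_congr rfl fun m _ => by ring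
    have hP : ∑ m ∈ Finset.univ.filter (fun m => n < m),
          (Real.exp (-(Sens n - Sens m)) / D) *
            ∑ k, w n k * ((S n k - S m k) - (Sens n - Sens m)) ≤ δ * M := by
      calc _ ≤ ∑ m ∈ Finset.univ.filter (fun m => n < m),
          (Real.exp (-(Sens n - Sens m)) / D) * (δ * M) :=
            Finset.sum_le_sum fun m _ =>
              mul_le_mul_of_nonneg_left (hdiff m) (by positivity)
        _ = ((∑ m ∈ Finset.univ.filter (fun m => n < m),
              Real.exp (-(Sens n - Sens m))) / D) * (δ * M) := by
            rw [← Finset.sum_mul, Finset.sum_div]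
        _ ≤ 1 * (δ * M) := by
            refine mul_le_mul_of_nonneg_right ?_ (mul_nonneg hδ hM0)
            rw [div_le_one hDpos]
            linarith
        _ = δ * M := one_mul _
    have hW : ∑ k, w n k * gPL n (fun i => S i k)
        ≤ ∑ k, (⨆ n, w n k) * gPL n (fun i => S i k) :=
      Finset.sum_le_sum fun k _ => mul_le_mul_of_nonneg_right (hWle n k) (hg _ _)
    linarith
  have tot := Finset.sum_le_sum fun n (_ : n ∈ Finset.univ) => key n
  rw [Finset.sum_sub_distrib, Finset.sum_add_distrib, Finset.sum_comm] at tot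
  simp only [Finset.sum_const, Finset.card_univ, Fintype.card_fin, nsmul_eq_mul,
    ← Finset.mul_sum] at tot
  unfold LPL
  linarith
end

section
/- Let N ≥ 1, K ≥ 1, δ ≥ 0, let S_{n,k} ∈ ℝ be the scores of item n under basic model k, and let weights w_{n,k} ∈ ℝ satisfy Σ_{k=1}^K w_{n,k} = 1 for every n and |w_{n,k} − w_{m,k}| ≤ δ for all n, m, k. Define S^ens_n = Σ_{k=1}^K w_{n,k} S_{n,k}. Fix an index n ∈ {1,…,N} and any base vector z₀ : {m : n < m ≤ N} → ℝ, and set c_m = exp(−z₀_m) / (1 + Σ_{n<j≤N} exp(−z₀_j)) for each m > n. Then |Σ_{m=n+1}^N c_m · (Σ_{k=1}^K w_{n,k}(S_{n,k} − S_{m,k}) − (S^ens_n − S^ens_m))| ≤ δ · max_{1≤m≤N} Σ_{k=1}^K |S_{m,k}|. -/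
/-- Bound on the first-order term `B` in the error-ambiguity decomposition of
the list-wise Plackett–Luce loss at position `n`: with coefficients
`cₘ = exp(−z₀ₘ)/(1 + Σ_{j > n} exp(−z₀ⱼ))`, the deviation between the weighted
basic-model score differences and the ensemble score differences is bounded by
`δ` times the largest total absolute score of an item. -/
theorem listwise_first_order_term_bound
    (N K : ℕ) (hN : 1 ≤ N) (hK : 1 ≤ K) (δ : ℝ) (hδ : 0 ≤ δ)
    (S : Fin N → Fin K → ℝ) (w : Fin N → Fin K → ℝ)
    (hsum : ∀ n, ∑ k, w n k = 1)
    (hδw : ∀ n m k, |w n k - w m k| ≤ δ)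
    (Sens : Fin N → ℝ) (hSens : ∀ n, Sens n = ∑ k, w n k * S n k)
    (n : Fin N) (z₀ : Fin N → ℝ) (c : Fin N → ℝ)
    (hc : ∀ m, c m = Real.exp (-(z₀ m)) /
      (1 + ∑ j ∈ Finset.univ.filter (fun j => n < j), Real.exp (-(z₀ j)))) :
    |∑ m ∈ Finset.univ.filter (fun m => n < m),
        c m * ((∑ k, w n k * (S n k - S m k)) - (Sens n - Sens m))| ≤
      δ * ⨆ m, ∑ k, |S m k| := by
  have hE : 0 ≤ ∑ j ∈ Finset.univ.filter (fun j => n < j), Real.exp (-(z₀ j)) :=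
    Finset.sum_nonneg (fun j _ => (Real.exp_pos _).le)
  have hc0 : ∀ m, 0 ≤ c m := by
    intro m
    rw [hc]
    exact div_nonneg (Real.exp_pos _).le (by linarith)
  have hc1 : ∑ m ∈ Finset.univ.filter (fun m => n < m), c m ≤ 1 := by
    rw [Finset.sum_congr rfl (fun m _ => hc m), ← Finset.sum_div, div_le_one (by linarith)]
    linarith
  have hbdd : BddAbove (Set.range fun m => ∑ k, |S m k|) := (Set.finite_range _).bddAbove
  have hM0 : 0 ≤ ⨆ m, ∑ k, |S m k| :=
    Real.iSup_nonneg (fun m => Finset.sum_nonneg (fun k _ => abs_nonneg _))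
  have hterm : ∀ m, |(∑ k, w n k * (S n k - S m k)) - (Sens n - Sens m)| ≤
      δ * ⨆ m, ∑ k, |S m k| := by
    intro m
    have h1 : (∑ k, w n k * (S n k - S m k)) - (Sens n - Sens m) =
        ∑ k, (w m k - w n k) * S m k := by
      rw [hSens, hSens, ← Finset.sum_sub_distrib, ← Finset.sum_sub_distrib]
      exact Finset.sum_congr rfl (fun k _ => by ring)
    rw [h1]
    calc |∑ k, (w m k - w n k) * S m k| ≤ ∑ k, |(w m k - w n k) * S m k| :=
          Finset.abs_sum_le_sum_abs _ _
      _ ≤ ∑ k, δ * |S m k| := by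
          refine Finset.sum_le_sum (fun k _ => ?_)
          rw [abs_mul]
          exact mul_le_mul_of_nonneg_right (hδw m n k) (abs_nonneg _)
      _ = δ * ∑ k, |S m k| := by rw [Finset.mul_sum]
      _ ≤ δ * ⨆ m, ∑ k, |S m k| := mul_le_mul_of_nonneg_left (le_ciSup hbdd m) hδ
  refine (Finset.abs_sum_le_sum_abs _ _).trans ?_
  calc _ ≤ ∑ m ∈ Finset.univ.filter (fun m => n < m), c m * (δ * ⨆ m, ∑ k, |S m k|) := by
        refine Finset.sum_le_sum (fun m _ => ?_)
        rw [abs_mul, abs_of_nonneg (hc0 m)]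
        exact mul_le_mul_of_nonneg_left (hterm m) (hc0 m)
    _ = (∑ m ∈ Finset.univ.filter (fun m => n < m), c m) * (δ * ⨆ m, ∑ k, |S m k|) := by
        rw [Finset.sum_mul]
    _ ≤ _ := mul_le_of_le_one_left (mul_nonneg hδ hM0) hc1
end

section
/- Let N ≥ 1 and K ≥ 1, let S_{n,k} ∈ ℝ be the scores of N items (indexed in ground-truth ranking order) under K basic models, and let w : {1,…,K} → ℝ satisfy w_k ≥ 0 and Σ_{k=1}^K w_k = 1, with the same model-level weight w_k used for every item. Define S^ens_n = Σ_{k=1}^K w_k S_{n,k}. For a score vector x : {1,…,N} → ℝ define g_n(x) = log(1 + Σ_{m=n+1}^N exp(−(x_n − x_m))) and L(x) = Σ_{n=1}^N g_n(x). For each n, k define A_{n,k} = g_n(S_{·,k}) − g_n(S^ens) + Σ_{m=n+1}^N [exp(−(S^ens_n − S^ens_m)) / (1 + Σ_{j=n+1}^N exp(−(S^ens_n − S^ens_j)))] · ((S_{n,k} − S_{m,k}) − (S^ens_n − S^ens_m)). Then each A_{n,k} ≥ 0 and L(S^ens) = Σ_{k=1}^K w_k L(S_{·,k}) − Σ_{n=1}^N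 Σ_{k=1}^K w_k A_{n,k}; in particular L(S^ens) ≤ Σ_{k=1}^K w_k L(S_{·,k}). -/
lemma bregman_aux {ι : Type*} (s : Finset ι) (y z : ι → ℝ) :
    0 ≤ Real.log (1 + ∑ m ∈ s, Real.exp (-(z m))) - Real.log (1 + ∑ m ∈ s, Real.exp (-(y m)))
      + ∑ m ∈ s, (Real.exp (-(y m)) / (1 + ∑ j ∈ s, Real.exp (-(y j)))) * (z m - y m) := by
  set D := 1 + ∑ j ∈ s, Real.exp (-(y j)) with hD
  have hDpos : 0 < D := by positivity
  set t := ∑ m ∈ s, (Real.exp (-(y m)) / D) * (y m - z m) with ht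
  have hneg : ∑ m ∈ s, (Real.exp (-(y m)) / D) * (z m - y m) = -t := by
    rw [ht, ← Finset.sum_neg_distrib]
    exact Finset.sum_congr rfl fun m _ => by ring
  have htD : ∑ m ∈ s, Real.exp (-(y m)) * (y m - z m) = t * D := by
    rw [ht, Finset.sum_mul]
    exact Finset.sum_congr rfl fun m _ => by field_simp
  have h1 : Real.exp t * (1 - t) ≤ 1 := by
    have h := mul_le_mul_of_nonneg_left (Real.add_one_le_exp (-t)) (Real.exp_pos t).le
    rw [← Real.exp_add, add_neg_cancel, Real.exp_zero] at h
    linarith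
  have h2 : ∀ m ∈ s, Real.exp t * (Real.exp (-(y m)) * (y m - z m) + (1 - t) * Real.exp (-(y m)))
      ≤ Real.exp (-(z m)) := by
    intro m _
    have h := mul_le_mul_of_nonneg_left (Real.add_one_le_exp (y m - z m - t))
      (mul_pos (Real.exp_pos t) (Real.exp_pos (-(y m)))).le
    rw [← Real.exp_add, ← Real.exp_add,
      show t + -(y m) + (y m - z m - t) = -(z m) by ring, Real.exp_add] at h
    linarith
  have h3 := Finset.sum_le_sum h2
  rw [← Finset.mul_sum, Finset.sum_add_distrib, htD, ← Finset.mul_sum] at h3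
  have hs : ∑ j ∈ s, Real.exp (-(y j)) = D - 1 := by rw [hD]; ring
  rw [hs] at h3
  have h4 : Real.exp t * D ≤ 1 + ∑ m ∈ s, Real.exp (-(z m)) := by linarith
  have h5 := Real.log_le_log (mul_pos (Real.exp_pos t) hDpos) h4
  rw [Real.log_mul (Real.exp_pos t).ne' hDpos.ne', Real.log_exp] at h5
  rw [hneg]
  linarith

/-- List-wise error-ambiguity decomposition with shared model-level weights
(the case `δ = 0`): every ambiguity `A n k` is nonnegative, the ensemble
list-wise loss equals the weighted average of the basic-model list-wise losses
minus the weighted ambiguities, and in particular the ensemble loss is at most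
the weighted average of the basic-model losses. -/
theorem listwise_equal_weight_decomposition
    (N K : ℕ) (hN : 1 ≤ N) (hK : 1 ≤ K)
    (S : Fin N → Fin K → ℝ) (w : Fin K → ℝ)
    (hw : ∀ k, 0 ≤ w k) (hsum : ∑ k, w k = 1)
    (Sens : Fin N → ℝ) (hSens : ∀ n, Sens n = ∑ k, w k * S n k)
    (A : Fin N → Fin K → ℝ)
    (hA : ∀ n k, A n k =
      gPL n (fun i => S i k) - gPL n Sens +
        ∑ m ∈ Finset.univ.filter (fun m => n < m),
          (Real.exp (-(Sens n - Sens m)) /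
              (1 + ∑ j ∈ Finset.univ.filter (fun j => n < j),
                Real.exp (-(Sens n - Sens j)))) *
            ((S n k - S m k) - (Sens n - Sens m))) :
    (∀ n k, 0 ≤ A n k) ∧
      LPL Sens = (∑ k, w k * LPL (fun i => S i k)) - ∑ n, ∑ k, w k * A n k ∧
      LPL Sens ≤ ∑ k, w k * LPL (fun i => S i k) := by
  have hnn : ∀ n k, 0 ≤ A n k := by
    intro n k
    rw [hA]
    exact bregman_aux (Finset.univ.filter (fun m => n < m))
      (fun m => Sens n - Sens m) (fun m => S n k - S m k)
  have hn : ∀ n, ∑ k, w k * A n k = (∑ k, w k * gPL n (fun i => S i k)) - gPL n Sens := by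
    intro n
    have hz : ∀ m, ∑ k, w k * ((S n k - S m k) - (Sens n - Sens m)) = 0 := by
      intro m
      simp only [mul_sub, Finset.sum_sub_distrib, ← Finset.sum_mul, hsum, ← hSens]
      ring
    simp only [hA, mul_add, mul_sub (w _) (gPL _ _), Finset.sum_add_distrib,
      Finset.sum_sub_distrib, ← Finset.sum_mul, hsum, one_mul]
    rw [add_eq_left]
    simp only [Finset.mul_sum]
    rw [Finset.sum_comm]
    refine Finset.sum_eq_zero fun m _ => ?_
    simp only [mul_left_comm (w _)]
    rw [← Finset.mul_sum, hz, mul_zero]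
  have hE : LPL Sens = (∑ k, w k * LPL (fun i => S i k)) - ∑ n, ∑ k, w k * A n k := by
    simp only [hn, LPL, Finset.mul_sum, Finset.sum_sub_distrib]
    rw [Finset.sum_comm]
    ring
  refine ⟨hnn, hE, ?_⟩
  rw [hE]
  have : 0 ≤ ∑ n, ∑ k, w k * A n k :=
    Finset.sum_nonneg fun n _ => Finset.sum_nonneg fun k _ => mul_nonneg (hw k) (hnn n k)
  linarith
end
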